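/- Let d ≥ 2 be an integer and let x₁,…,x_d be pairwise distinct positive real numbers with elementary symmetric polynomials e₁,…,e_d. Then the entropy and subentropy satisfy H(x₁,…,x_d) − Q(x₁,…,x_d) ≥ Σ_{k=2}^d d^{k−1} e_k / ( binom(d−1, k−1) · e₁^{k−1} ). -/

import Mathlib

open MeasureTheory Real

/-!
Write `Q = -∑ i, w i * log (x i)`. Lagrange interpolation of `T ^ d` at the points `x i` gives
`∑ i, w i / (x i + t) = 1 - t ^ d / ∏ i, (x i + t)` and `∑ i, w i = ∑ i, x i`. Since the
coefficients `x i - w i` sum to zero, `H - Q` is the integral of `∑ i, (x i - w i) / (x i + t)`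
over `t > 0`, and by Euler's identity for the homogeneous polynomials `e k` this integrand equals
`∑ k ≥ 2, (k - 1) * e k * t ^ (d - k) / ∏ i, (x i + t)`. All its terms are nonnegative, so
bounding the denominator by `(t + e 1 / d) ^ d`, which is AM-GM, leaves a sum of beta integrals
that evaluates to the asserted bound.
-/

open Filter Finset Polynomial Topology

section Algebra

variable {ι R A F : Type*} [CommSemiring R] [CommRing A] [Field F]

lemma prod_mul_add_eq_sum_esymm (s : Finset ι) (x : ι → R) (y t : R) :
    ∏ i ∈ s, (x i * y + t) =
      ∑ k ∈ range (#s + 1), (s.1.map x).esymm k * y ^ k * t ^ (#s - k) := by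
  classical
  rw [prod_add, sum_powerset]
  refine sum_congr rfl fun k _ => ?_
  rw [esymm_map_val, sum_mul, sum_mul]
  refine sum_congr rfl fun u hu => ?_
  obtain ⟨hus, rfl⟩ := mem_powersetCard.1 hu
  rw [prod_mul_distrib, prod_const, prod_const, card_sdiff_of_subset hus]

lemma prod_add_eq_sum_esymm (s : Finset ι) (x : ι → R) (t : R) :
    ∏ i ∈ s, (x i + t) = ∑ k ∈ range (#s + 1), (s.1.map x).esymm k * t ^ (#s - k) := by
  simpa using prod_mul_add_eq_sum_esymm s x 1 t

lemma sum_mul_prod_erase_add [DecidableEq ι] (s : Finset ι) (x : ι → R) (t : R) :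
    ∑ i ∈ s, x i * ∏ j ∈ s.erase i, (x j + t) =
      ∑ k ∈ range (#s + 1), k * (s.1.map x).esymm k * t ^ (#s - k) := by
  -- Euler's identity: scale `x` by a variable and differentiate at `1`.
  have hscaled : ∏ i ∈ s, (C (x i) * X + C t) =
      ∑ k ∈ range (#s + 1), C ((s.1.map x).esymm k) * X ^ k * C t ^ (#s - k) := by
    simp only [prod_mul_add_eq_sum_esymm, esymm_map_val, map_sum, map_prod]
  have h := congrArg (fun p => p.derivative.eval 1) hscaled
  simpa [derivative_prod_finset, eval_finsetSum, eval_prod, derivative_pow, mul_comm (x _),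
    mul_comm (Nat.cast _)] using h

lemma sum_Icc_two_sub_one_mul_esymm_mul_pow [DecidableEq ι] (s : Finset ι) (x : ι → A) (t : A) :
    ∑ k ∈ Icc 2 #s, (k - 1) * (s.1.map x).esymm k * t ^ (#s - k) =
      ∑ i ∈ s, x i * ∏ j ∈ s.erase i, (x j + t) - ∏ i ∈ s, (x i + t) + t ^ #s := by
  have hone : ∑ k ∈ Icc 2 #s, (k - 1) * (s.1.map x).esymm k * t ^ (#s - k) =
      ∑ k ∈ Ico 1 (#s + 1), (k - 1) * (s.1.map x).esymm k * t ^ (#s - k) := by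
    refine sum_subset (by grind) fun k hk hk' => ?_
    obtain rfl : k = 1 := by grind
    simp
  rw [hone, sum_mul_prod_erase_add, prod_add_eq_sum_esymm, ← sum_sub_distrib,
    sum_range_eq_add_Ico _ (Nat.succ_pos _)]
  simp [sub_mul, esymm_map_val]

lemma degree_X_pow_card_sub_nodal_lt [Nontrivial A] (s : Finset ι) (x : ι → A) :
    (X ^ #s - Lagrange.nodal s x).degree < (#s : WithBot ℕ) := by
  simpa using degree_sub_lt_left (p := (X ^ #s : A[X])) (q := Lagrange.nodal s x)
    (by simp [Lagrange.degree_nodal]) (monic_X_pow _).ne_zero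
    (by simp [Lagrange.nodal_monic.leadingCoeff])

lemma eval_X_pow_card_sub_nodal {s : Finset ι} (x : ι → A) {i : ι} (hi : i ∈ s) :
    (X ^ #s - Lagrange.nodal s x).eval (x i) = x i ^ #s := by
  simp [Lagrange.eval_nodal_at_node hi]

lemma sum_div_add_eq_sum_mul_inv_sub_inv {s : Finset ι} {c : ι → F} (hc : ∑ i ∈ s, c i = 0)
    (x : ι → F) (b t : F) :
    ∑ i ∈ s, c i / (x i + t) = ∑ i ∈ s, c i * ((x i + t)⁻¹ - (b + t)⁻¹) := by
  simp [mul_sub, ← sum_mul, hc, div_eq_mul_inv]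

variable [DecidableEq ι]

/-- The weight of `log (x i)` in the subentropy of the family `x i`, `i ∈ s`. It is the Lagrange
nodal weight at `x i` scaled by `x i ^ #s`, and meaningful when `x` is injective on `s`. -/
def subentropyWeight (s : Finset ι) (x : ι → F) (i : ι) : F :=
  x i ^ #s / ∏ j ∈ s.erase i, (x i - x j)

lemma sum_subentropyWeight {s : Finset ι} {x : ι → F} (hx : Set.InjOn x s) :
    ∑ i ∈ s, subentropyWeight s x i = ∑ i ∈ s, x i := by
  obtain rfl | hs := s.eq_empty_or_nonempty
  · simp
  have h := Lagrange.coeff_eq_sum hx (degree_X_pow_card_sub_nodal_lt s x)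
  rw [coeff_sub, coeff_X_pow, if_neg (by have := hs.card_pos; omega), Lagrange.nodal_eq,
    prod_X_sub_C_coeff_card_pred _ _ hs.card_pos, zero_sub, neg_neg] at h
  rw [h]
  exact sum_congr rfl fun i hi => by
    rw [← Lagrange.nodal_eq, eval_X_pow_card_sub_nodal x hi, subentropyWeight]

lemma sum_sub_subentropyWeight {s : Finset ι} {x : ι → F} (hx : Set.InjOn x s) :
    ∑ i ∈ s, (x i - subentropyWeight s x i) = 0 := by
  rw [sum_sub_distrib, sum_subentropyWeight hx, sub_self]

lemma sum_subentropyWeight_div_sub {s : Finset ι} {x : ι → F} (hx : Set.InjOn x s) {y : F}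
    (hy : ∀ i ∈ s, y ≠ x i) :
    ∑ i ∈ s, subentropyWeight s x i / (y - x i) = ∏ i ∈ s, y / (y - x i) - 1 := by
  have hprod : ∏ i ∈ s, (y - x i) ≠ 0 := prod_ne_zero_iff.2 fun i hi => sub_ne_zero.2 (hy i hi)
  have hinterp := Lagrange.eq_interpolate_of_eval_eq (fun i => x i ^ #s) hx
    (degree_X_pow_card_sub_nodal_lt s x) fun i hi => eval_X_pow_card_sub_nodal x hi
  have h := Lagrange.eval_interpolate_not_at_node (fun i => x i ^ #s) hy
  rw [← hinterp, eval_sub, eval_pow, eval_X, Lagrange.eval_nodal, mul_comm] at h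
  rw [prod_div_distrib, prod_const, div_sub_one hprod, eq_div_iff hprod, h]
  congr 1
  refine sum_congr rfl fun i _ => ?_
  rw [subentropyWeight, Lagrange.nodalWeight, prod_inv_distrib]
  ring

lemma sum_subentropyWeight_div_add {s : Finset ι} {x : ι → F} (hx : Set.InjOn x s) {t : F}
    (ht : ∀ i ∈ s, x i + t ≠ 0) :
    ∑ i ∈ s, subentropyWeight s x i / (x i + t) = 1 - t ^ #s / ∏ i ∈ s, (x i + t) := by
  have hneg : ∀ i, -t - x i = -(x i + t) := fun i => by ring
  have h := sum_subentropyWeight_div_sub hx (y := -t)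
    fun i hi h => ht i hi (by rw [← h, neg_add_cancel])
  simp only [hneg, neg_div_neg_eq, prod_div_distrib, prod_const] at h
  simp only [div_neg, sum_neg_distrib] at h
  rw [← neg_sub, ← h, neg_neg]

lemma sum_sub_subentropyWeight_div_add {s : Finset ι} {x : ι → F} (hx : Set.InjOn x s) {t : F}
    (ht : ∀ i ∈ s, x i + t ≠ 0) :
    ∑ i ∈ s, (x i - subentropyWeight s x i) / (x i + t) =
      ∑ k ∈ Icc 2 #s, (k - 1) * (s.1.map x).esymm k * (t ^ (#s - k) / ∏ i ∈ s, (x i + t)) := by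
  have hprod : ∏ i ∈ s, (x i + t) ≠ 0 := prod_ne_zero_iff.2 ht
  have hfrac : ∑ i ∈ s, x i / (x i + t) =
      (∑ i ∈ s, x i * ∏ j ∈ s.erase i, (x j + t)) / ∏ i ∈ s, (x i + t) := by
    rw [sum_div]
    refine sum_congr rfl fun i hi => ?_
    rw [← mul_prod_erase s _ hi, mul_div_mul_right]
    exact prod_ne_zero_iff.2 fun j hj => ht j (mem_of_mem_erase hj)
  simp only [sub_div, sum_sub_distrib, hfrac, sum_subentropyWeight_div_add hx ht, mul_div_assoc']
  rw [← sum_div, sum_Icc_two_sub_one_mul_esymm_mul_pow]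
  field_simp
  ring

end Algebra

section Integrals

variable {ι : Type*}

lemma hasDerivAt_log_add_sub_log_add {a b t : ℝ} (ha : a + t ≠ 0) (hb : b + t ≠ 0) :
    HasDerivAt (fun t => log (a + t) - log (b + t)) ((a + t)⁻¹ - (b + t)⁻¹) t := by
  have hlog : ∀ c, c + t ≠ 0 → HasDerivAt (fun t => log (c + t)) (c + t)⁻¹ t := fun c hc => by
    simpa using ((hasDerivAt_id t).const_add c).log hc
  exact (hlog a ha).fun_sub (hlog b hb)

lemma tendsto_log_add_sub_log_add_atTop (a b : ℝ) :
    Tendsto (fun t => log (a + t) - log (b + t)) atTop (𝓝 0) := by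
  simpa [add_comm] using (tendsto_log_comp_add_sub_log a).sub (tendsto_log_comp_add_sub_log b)

lemma integrableOn_inv_add_sub_inv_add {a b : ℝ} (ha : 0 < a) (hb : 0 < b) :
    IntegrableOn (fun t => (a + t)⁻¹ - (b + t)⁻¹) (Set.Ioi 0) := by
  wlog hab : a ≤ b generalizing a b
  · exact (this hb ha (le_of_not_ge hab)).neg.congr (by filter_upwards with t; simp)
  refine integrableOn_Ioi_deriv_of_nonneg' (fun t (ht : 0 ≤ t) => ?_) (fun t (ht : 0 < t) => ?_)
    (tendsto_log_add_sub_log_add_atTop a b)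
  · exact hasDerivAt_log_add_sub_log_add (by positivity) (by positivity)
  · rw [sub_nonneg]
    gcongr

lemma integral_inv_add_sub_inv_add {a b : ℝ} (ha : 0 < a) (hb : 0 < b) :
    ∫ t in Set.Ioi 0, ((a + t)⁻¹ - (b + t)⁻¹) = log b - log a := by
  rw [integral_Ioi_of_hasDerivAt_of_tendsto' (fun t (ht : 0 ≤ t) => hasDerivAt_log_add_sub_log_add
    (by positivity) (by positivity)) (integrableOn_inv_add_sub_inv_add ha hb)
    (tendsto_log_add_sub_log_add_atTop a b)]
  simp

lemma integrableOn_sum_div_add {s : Finset ι} {x c : ι → ℝ} (hx : ∀ i ∈ s, 0 < x i)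
    (hc : ∑ i ∈ s, c i = 0) : IntegrableOn (fun t => ∑ i ∈ s, c i / (x i + t)) (Set.Ioi 0) := by
  simp only [sum_div_add_eq_sum_mul_inv_sub_inv hc x 1]
  exact integrable_finsetSum _ fun i hi =>
    (integrableOn_inv_add_sub_inv_add (hx i hi) one_pos).const_mul _

lemma integral_sum_div_add {s : Finset ι} {x c : ι → ℝ} (hx : ∀ i ∈ s, 0 < x i)
    (hc : ∑ i ∈ s, c i = 0) :
    ∫ t in Set.Ioi 0, ∑ i ∈ s, c i / (x i + t) = -∑ i ∈ s, c i * log (x i) := by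
  simp only [sum_div_add_eq_sum_mul_inv_sub_inv hc x 1]
  rw [integral_finsetSum _ fun i hi =>
    (integrableOn_inv_add_sub_inv_add (hx i hi) one_pos).const_mul _, ← sum_neg_distrib]
  refine sum_congr rfl fun i hi => ?_
  rw [integral_const_mul, integral_inv_add_sub_inv_add (hx i hi) one_pos, log_one, zero_sub,
    mul_neg]

lemma hasDerivAt_pow_div_add_pow {a t : ℝ} (ht : t + a ≠ 0) (m n : ℕ) :
    HasDerivAt (fun t => t ^ m / (t + a) ^ n)
      (m * (t ^ (m - 1) / (t + a) ^ n) - n * (t ^ m / (t + a) ^ (n + 1))) t := by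
  have hden : HasDerivAt (fun t => (t + a) ^ n) (n * (t + a) ^ (n - 1)) t := by
    simpa using ((hasDerivAt_id t).add_const a).fun_pow n
  refine ((hasDerivAt_pow m t).fun_div hden (pow_ne_zero n ht)).congr_deriv ?_
  obtain _ | n := n
  · simp
  rw [Nat.add_sub_cancel]
  field_simp
  ring

lemma tendsto_pow_div_add_pow_atTop (a : ℝ) {m n : ℕ} (h : m < n) :
    Tendsto (fun t => t ^ m / (t + a) ^ n) atTop (𝓝 0) := by
  have hlim := div_tendsto_atTop_zero_of_degree_lt (X ^ m) ((X + C a) ^ n) (by simpa using h)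
  simpa using hlim

lemma integrableOn_pow_div_add_pow {a : ℝ} (ha : 0 < a) {m n : ℕ} (h : m + 1 < n) :
    IntegrableOn (fun t => t ^ m / (t + a) ^ n) (Set.Ioi 0) := by
  have hexp : (m : ℝ) - n < -1 := by
    rify at h
    linarith
  refine (integrableOn_add_rpow_Ioi_of_lt hexp (neg_lt_zero.2 ha)).mono'
    (Measurable.aestronglyMeasurable (by fun_prop))
    ((ae_restrict_mem measurableSet_Ioi).mono fun t (ht : 0 < t) => ?_)
  have hta : 0 < t + a := by positivity
  calc ‖t ^ m / (t + a) ^ n‖ = t ^ m / (t + a) ^ n := norm_of_nonneg (by positivity)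
    _ ≤ (t + a) ^ m / (t + a) ^ n := by gcongr; linarith
    _ = (t + a) ^ ((m : ℝ) - n) := by rw [rpow_sub hta, rpow_natCast, rpow_natCast]

lemma mul_integral_inv_add_pow {a : ℝ} (ha : 0 < a) (n : ℕ) :
    (n + 1) * ∫ t in Set.Ioi 0, ((t + a) ^ (n + 2))⁻¹ = (a ^ (n + 1))⁻¹ := by
  have hint := integrableOn_pow_div_add_pow ha (show 0 + 1 < n + 2 by omega)
  have h := integral_Ioi_of_hasDerivAt_of_tendsto'
    (fun t (ht : 0 ≤ t) => hasDerivAt_pow_div_add_pow (by positivity) 0 (n + 1))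
    (by simpa using! (hint.const_mul (n + 1 : ℝ)).neg)
    (tendsto_pow_div_add_pow_atTop a n.succ_pos)
  simpa [integral_neg, integral_const_mul] using h

lemma mul_integral_pow_succ_div_add_pow {a : ℝ} (ha : 0 < a) (m n : ℕ) :
    (m + n + 2) * ∫ t in Set.Ioi 0, t ^ (m + 1) / (t + a) ^ (m + 1 + n + 2) =
      (m + 1) * ∫ t in Set.Ioi 0, t ^ m / (t + a) ^ (m + n + 2) := by
  have hint := (integrableOn_pow_div_add_pow ha
    (show m + 1 < m + n + 2 by omega)).const_mul (m + 1 : ℝ)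
  have hint' := (integrableOn_pow_div_add_pow ha
    (show m + 1 + 1 < m + 1 + n + 2 by omega)).const_mul (m + n + 2 : ℝ)
  have hderiv : ∀ t ∈ Set.Ici (0 : ℝ), HasDerivAt (fun t => t ^ (m + 1) / (t + a) ^ (m + n + 2))
      ((m + 1) * (t ^ m / (t + a) ^ (m + n + 2)) -
        (m + n + 2) * (t ^ (m + 1) / (t + a) ^ (m + 1 + n + 2))) t := fun t (ht : 0 ≤ t) => by
    have h := hasDerivAt_pow_div_add_pow (t := t) (a := a) (by positivity) (m + 1) (m + n + 2)
    rw [Nat.add_sub_cancel, show m + n + 2 + 1 = m + 1 + n + 2 by omega] at h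
    exact_mod_cast h
  have hzero := integral_Ioi_of_hasDerivAt_of_tendsto' hderiv (hint.sub hint')
    (tendsto_pow_div_add_pow_atTop a (show m + 1 < m + n + 2 by omega))
  rw [integral_sub hint hint', integral_const_mul, integral_const_mul] at hzero
  exact (sub_eq_zero.1 (by simpa using! hzero)).symm

lemma mul_integral_pow_div_add_pow {a : ℝ} (ha : 0 < a) (m n : ℕ) :
    (n + 1) * ∫ t in Set.Ioi 0, t ^ m / (t + a) ^ (m + n + 2) =
      ((m + n + 1).choose (n + 1) * a ^ (n + 1))⁻¹ := by
  induction m with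
  | zero => simpa using mul_integral_inv_add_pow ha n
  | succ m ih =>
    have hchoose : ((m + n + 1).choose (n + 1) : ℝ) * (m + n + 2) =
        (m + 1 + n + 1).choose (n + 1) * (m + 1) := by
      have := Nat.choose_mul_succ_eq (m + n + 1) (n + 1)
      rw [show m + n + 1 + 1 - (n + 1) = m + 1 by omega,
        show m + n + 1 + 1 = m + 1 + n + 1 by omega] at this
      rify at this
      convert this using 2
      ring
    have hrec := mul_integral_pow_succ_div_add_pow ha m n
    have hpos : 0 < ((m + n + 1).choose (n + 1) : ℝ) :=
      Nat.cast_pos.2 (Nat.choose_pos (by omega))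
    have hpos' : 0 < ((m + 1 + n + 1).choose (n + 1) : ℝ) :=
      Nat.cast_pos.2 (Nat.choose_pos (by omega))
    rw [← mul_right_inj' (show (m + n + 2 : ℝ) ≠ 0 by positivity), mul_left_comm, hrec,
      mul_left_comm, ih]
    field_simp
    linarith

lemma mul_integral_pow_sub_div_add_pow {a : ℝ} (ha : 0 < a) {k d : ℕ} (hk : 2 ≤ k) (hkd : k ≤ d) :
    ((k : ℝ) - 1) * ∫ t in Set.Ioi 0, t ^ (d - k) / (t + a) ^ d =
      ((d - 1).choose (k - 1) * a ^ (k - 1))⁻¹ := by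
  obtain ⟨n, rfl⟩ := Nat.exists_eq_add_of_le' hk
  obtain ⟨m, rfl⟩ := Nat.exists_eq_add_of_le' hkd
  rw [Nat.add_sub_cancel, show ((n + 2 : ℕ) : ℝ) - 1 = n + 1 by push_cast; ring]
  exact mul_integral_pow_div_add_pow ha m n

end Integrals

section ArithmeticMean

variable {ι : Type*}

lemma prod_le_sum_div_card_pow {s : Finset ι} {f : ι → ℝ} (hf : ∀ i ∈ s, 0 ≤ f i) :
    ∏ i ∈ s, f i ≤ ((∑ i ∈ s, f i) / #s) ^ #s := by
  obtain rfl | hs := s.eq_empty_or_nonempty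
  · simp
  have hamgm := geom_mean_le_arith_mean s (fun _ => 1) f (by simp) (by simpa using hs.card_pos) hf
  simp only [rpow_one, sum_const, nsmul_eq_mul, mul_one, one_mul] at hamgm
  rw [← rpow_natCast]
  exact (rpow_inv_le_iff_of_pos (prod_nonneg hf) (div_nonneg (sum_nonneg hf) (Nat.cast_nonneg _))
    (by exact_mod_cast hs.card_pos)).1 hamgm

lemma prod_add_le_add_mean_pow {s : Finset ι} {x : ι → ℝ} {t : ℝ}
    (hx : ∀ i ∈ s, 0 ≤ x i + t) :
    ∏ i ∈ s, (x i + t) ≤ (t + (∑ i ∈ s, x i) / #s) ^ #s := by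
  obtain rfl | hs := s.eq_empty_or_nonempty
  · simp
  have h := prod_le_sum_div_card_pow hx
  rwa [sum_add_distrib, sum_const, nsmul_eq_mul, add_div,
    mul_div_cancel_left₀ _ (by simpa using hs.ne_empty), add_comm] at h

end ArithmeticMean

section Entropy

variable {ι : Type*}

lemma esymm_nonneg {R : Type*} [CommSemiring R] [PartialOrder R] [IsOrderedRing R]
    {s : Finset ι} {x : ι → R} (hx : ∀ i ∈ s, 0 ≤ x i) (k : ℕ) :
    0 ≤ (s.1.map x).esymm k := by
  rw [esymm_map_val]
  exact sum_nonneg fun u hu => prod_nonneg fun i hi => hx i ((mem_powersetCard.1 hu).1 hi)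

/-- The entropy `H` of the finite family `x i`, `i ∈ s`. -/
noncomputable def entropy (s : Finset ι) (x : ι → ℝ) : ℝ :=
  -∑ i ∈ s, x i * log (x i)

/-- The subentropy `Q` of the finite family `x i`, `i ∈ s`, whose values are meant to be pairwise
distinct: otherwise some denominators in `subentropyWeight` vanish. -/
noncomputable def subentropy [DecidableEq ι] (s : Finset ι) (x : ι → ℝ) : ℝ :=
  -∑ i ∈ s, subentropyWeight s x i * log (x i)

/-- The function of `t` whose integral over `(0, ∞)` is the gap `H - Q`. -/
noncomputable def entropyGapDensity (s : Finset ι) (x : ι → ℝ) (t : ℝ) : ℝ :=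
  ∑ k ∈ Icc 2 #s, (k - 1) * (s.1.map x).esymm k * (t ^ (#s - k) / ∏ i ∈ s, (x i + t))

variable {s : Finset ι} {x : ι → ℝ}

lemma eqOn_entropyGapDensity [DecidableEq ι] (hx : ∀ i ∈ s, 0 < x i) (hinj : Set.InjOn x s) :
    Set.EqOn (fun t => ∑ i ∈ s, (x i - subentropyWeight s x i) / (x i + t))
      (entropyGapDensity s x) (Set.Ioi 0) :=
  fun _ ht => sum_sub_subentropyWeight_div_add hinj fun i hi => (add_pos (hx i hi) ht).ne'

lemma integrableOn_entropyGapDensity (hx : ∀ i ∈ s, 0 < x i) (hinj : Set.InjOn x s) :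
    IntegrableOn (entropyGapDensity s x) (Set.Ioi 0) := by
  classical
  exact (integrableOn_sum_div_add hx (sum_sub_subentropyWeight hinj)).congr_fun
    (eqOn_entropyGapDensity hx hinj) measurableSet_Ioi

lemma entropy_sub_subentropy_eq_integral [DecidableEq ι] (hx : ∀ i ∈ s, 0 < x i)
    (hinj : Set.InjOn x s) :
    entropy s x - subentropy s x = ∫ t in Set.Ioi 0, entropyGapDensity s x t := by
  rw [← setIntegral_congr_fun measurableSet_Ioi (eqOn_entropyGapDensity hx hinj),
    integral_sum_div_add hx (sum_sub_subentropyWeight hinj), entropy, subentropy]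
  simp only [sub_mul, sum_sub_distrib]
  ring

lemma sum_mul_pow_div_add_mean_pow_le_entropyGapDensity (hx : ∀ i ∈ s, 0 < x i) {t : ℝ}
    (ht : 0 ≤ t) :
    ∑ k ∈ Icc 2 #s, (k - 1) * (s.1.map x).esymm k *
      (t ^ (#s - k) / (t + (∑ i ∈ s, x i) / #s) ^ #s) ≤ entropyGapDensity s x t := by
  have hpos : ∀ i ∈ s, 0 < x i + t := fun i hi => add_pos_of_pos_of_nonneg (hx i hi) ht
  refine sum_le_sum fun k hk => ?_
  have hk : (1 : ℝ) ≤ k := by exact_mod_cast one_le_two.trans (mem_Icc.1 hk).1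
  have hcoeff : 0 ≤ (k - 1) * (s.1.map x).esymm k :=
    mul_nonneg (sub_nonneg.2 hk) (esymm_nonneg (fun i hi => (hx i hi).le) k)
  exact mul_le_mul_of_nonneg_left (div_le_div_of_nonneg_left (pow_nonneg ht _) (prod_pos hpos)
    (prod_add_le_add_mean_pow fun i hi => (hpos i hi).le)) hcoeff

lemma sum_esymm_mul_integral_le_entropy_sub_subentropy [DecidableEq ι] (hs : s.Nonempty)
    (hx : ∀ i ∈ s, 0 < x i) (hinj : Set.InjOn x s) :
    ∑ k ∈ Icc 2 #s, (k - 1) * (s.1.map x).esymm k *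
      ∫ t in Set.Ioi 0, t ^ (#s - k) / (t + (∑ i ∈ s, x i) / #s) ^ #s ≤
        entropy s x - subentropy s x := by
  have hmean : 0 < (∑ i ∈ s, x i) / #s := div_pos (sum_pos hx hs) (by exact_mod_cast hs.card_pos)
  have hint : ∀ k ∈ Icc 2 #s, IntegrableOn (fun t => (k - 1) * (s.1.map x).esymm k *
      (t ^ (#s - k) / (t + (∑ i ∈ s, x i) / #s) ^ #s)) (Set.Ioi 0) := fun k hk =>
    (integrableOn_pow_div_add_pow hmean (by grind)).const_mul _
  simp only [← integral_const_mul]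
  rw [entropy_sub_subentropy_eq_integral hx hinj, ← integral_finsetSum _ hint]
  exact setIntegral_mono_on (integrable_finsetSum _ hint) (integrableOn_entropyGapDensity hx hinj)
    measurableSet_Ioi fun _ ht => sum_mul_pow_div_add_mean_pow_le_entropyGapDensity hx ht.le

end Entropy

/-- **Lower bound on the entropy–subentropy gap.**
For `d ≥ 2` and pairwise distinct positive reals `x₁, …, x_d` with elementary
symmetric polynomials `e_k`,
`H − Q ≥ Σ_{k=2}^d d^{k−1} e_k / (C(d−1,k−1) e₁^{k−1})`. -/
theorem entropy_sub_subentropy_lower_bound (d : ℕ) (hd : 2 ≤ d) (x : Fin d → ℝ)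
    (hx : ∀ i, 0 < x i) (hdist : ∀ i j, i ≠ j → x i ≠ x j)
    (e : ℕ → ℝ)
    (he : ∀ k, e k = ∑ t ∈ Finset.powersetCard k (Finset.univ : Finset (Fin d)),
      ∏ i ∈ t, x i) :
    ∑ k ∈ Finset.Icc 2 d, (d : ℝ) ^ (k - 1) * e k / (((d - 1).choose (k - 1) : ℝ) * e 1 ^ (k - 1))
      ≤ (-∑ i, x i * Real.log (x i))
        - (-∑ i, (x i ^ d / ∏ j ∈ Finset.univ.erase i, (x i - x j)) * Real.log (x i)) := by
  have : NeZero d := ⟨by omega⟩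
  have hinj : Set.InjOn x (univ : Finset (Fin d)) := fun i _ j _ => not_imp_not.1 (hdist i j)
  have hesymm : ∀ k, e k = (univ.val.map x).esymm k := fun k =>
    (he k).trans (esymm_map_val x univ k).symm
  have he1 : e 1 = ∑ i, x i := by simp [he, powersetCard_one]
  have hmean : 0 < e 1 / d := by
    rw [he1]
    exact div_pos (sum_pos (fun i _ => hx i) univ_nonempty) (by positivity)
  calc
    _ = ∑ k ∈ Icc 2 d, (k - 1) * e k * ∫ t in Set.Ioi 0, t ^ (d - k) / (t + e 1 / d) ^ d := by
      refine sum_congr rfl fun k hk => ?_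
      obtain ⟨hk, hkd⟩ := mem_Icc.1 hk
      rw [mul_right_comm, mul_integral_pow_sub_div_add_pow hmean hk hkd, div_pow]
      field_simp
    _ ≤ entropy univ x - subentropy univ x := by
      simpa only [card_fin, ← hesymm, ← he1] using
        sum_esymm_mul_integral_le_entropy_sub_subentropy univ_nonempty (fun i _ => hx i) hinj
    _ = _ := by simp [entropy, subentropy, subentropyWeight]
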